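/- arXiv:math/0408026 — 2 statements merged into one kernel-verified Lean document; each statement's English description precedes it below -/
import Mathlib

section
/- If a and b lie at distances r ≥ 1 and s ≥ 1 along opposite rays from p (so the angle ∠apb = π), then any rectifiable arc from a to b avoiding the open unit ball B(p) has length at least f(r)+f(s), where f(x) = sqrt(x²-1)+arcsin(1/x). -/
open Real Set

noncomputable def f (r : ℝ) : ℝ := Real.sqrt (r^2 - 1) + Real.arcsin (1/r)

noncomputable def g (r : ℝ) : ℝ :=
  if r ≤ 2 then 2*Real.pi - 2*Real.arcsin (r/2) else Real.pi

noncomputable def m (r s θ : ℝ) : ℝ :=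
  if θ ≤ Real.arccos (1/r) + Real.arccos (1/s) then
    Real.sqrt (r^2 + s^2 - 2*r*s*Real.cos θ)
  else f r + f s + (θ - Real.pi)

abbrev E3 := EuclideanSpace ℝ (Fin 3)

/-- A set `K` has thickness at least 1 (thickness = twice infimal circumradius over
triples of distinct points) iff no three distinct points of `K` lie on a common
sphere of radius less than `1/2`. -/
def ThickOne (K : Set E3) : Prop :=
  ∀ x ∈ K, ∀ y ∈ K, ∀ z ∈ K, x ≠ y → y ≠ z → x ≠ z →
    ∀ (c : E3) (ρ : ℝ), dist x c = ρ → dist y c = ρ → dist z c = ρ → 1/2 ≤ ρ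

/-!
For `c > 0` let `h_c(x) = √(x² - c²) + c * arcsin (c / x)`. Outside the closed ball of radius `c`
around the origin, `x ↦ h_c(‖x‖) + c * ∠ q x` is locally 1-Lipschitz for every `q`: this is the
law of cosines combined with the fact that `cos` lies below its tangents on `[-π/2, π/2]`. So its
total change along a curve is at most the length of the curve. Applied with `c ≥ 1` the minimal
distance of the curve to the origin and `q` a point of the curve realising it, on the two pieces
before and after `q`, this gives length at least `h_c(r) + h_c(s) + c * (θ - π)`, where `r` and
`s` are the distances of the end points to the origin and `θ` is the angle between them. That
bound is convex in `c`, with nonnegative derivative at `c = 1` when `θ ≥ arccos (1 / r) + arccos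
(1 / s)`, so it is at least its value at `c = 1`.
-/

open Filter Topology

open scoped NNReal

lemma edist_le_mul_eVariationOn_of_locally_lipschitz {E F : Type*} [PseudoEMetricSpace E]
    [PseudoEMetricSpace F] {γ : ℝ → E} {G : E → F} {K : ℝ≥0} {a b : ℝ} (hab : a ≤ b)
    (hγ : ContinuousOn γ (Icc a b))
    (hG : ∀ t ∈ Icc a b, ∃ U ∈ 𝓝 (γ t), LipschitzOnWith K G U) :
    edist (G (γ a)) (G (γ b)) ≤ K * eVariationOn γ (Icc a b) := by
  have hcover : ∀ t : Icc a b, ∃ W : Set (Icc a b), IsOpen W ∧ t ∈ W ∧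
      LipschitzOnWith K G ((fun t : Icc a b ↦ γ t) '' W) := fun t ↦ by
    obtain ⟨U, hU, hGU⟩ := hG t t.2
    obtain ⟨W, hWU, hW, htW⟩ := mem_nhds_iff.1 (hγ.domRestrict.continuousAt.preimage_mem_nhds hU)
    exact ⟨W, hW, htW, hGU.mono (image_subset_iff.2 hWU)⟩
  choose W hWopen hmem hLip using hcover
  obtain ⟨u, hu0, humono, ⟨n, hn⟩, hsub⟩ := exists_monotone_Icc_subset_open_cover_Icc hab hWopen
    fun t _ ↦ mem_iUnion.2 ⟨t, hmem t⟩
  have hstep (k : ℕ) : edist (G (γ (u k))) (G (γ (u (k + 1)))) ≤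
      K * edist (γ (u (k + 1))) (γ (u k)) := by
    obtain ⟨t, ht⟩ := hsub k
    have hk := humono k.le_succ
    rw [edist_comm (γ _)]
    exact hLip t (mem_image_of_mem _ (ht (left_mem_Icc.2 hk)))
      (mem_image_of_mem _ (ht (right_mem_Icc.2 hk)))
  calc edist (G (γ a)) (G (γ b))
      = edist (G (γ (u 0))) (G (γ (u n))) := by rw [hu0, hn n le_rfl]
    _ ≤ ∑ k ∈ Finset.range n, edist (G (γ (u k))) (G (γ (u (k + 1)))) :=
        edist_le_range_sum_edist (fun k ↦ G (γ (u k))) n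
    _ ≤ ∑ k ∈ Finset.range n, K * edist (γ (u (k + 1))) (γ (u k)) :=
        Finset.sum_le_sum fun k _ ↦ hstep k
    _ = K * ∑ k ∈ Finset.range n, edist (γ (u (k + 1))) (γ (u k)) := (Finset.mul_sum ..).symm
    _ ≤ K * eVariationOn γ (Icc a b) := by
        gcongr
        exact eVariationOn.sum_le (u := fun k ↦ (u k : ℝ)) humono fun k ↦ (u k).2

lemma cos_le_cos_sub_mul_sin {x y : ℝ} (hx : x ∈ Icc (-(π / 2)) (π / 2))
    (hy : y ∈ Icc (-(π / 2)) (π / 2)) : cos y ≤ cos x - (y - x) * sin x := by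
  have hconcave := strictConcaveOn_cos_Icc.concaveOn
  rcases lt_trichotomy x y with hxy | rfl | hyx
  · have h := hconcave.slope_le_of_hasDerivAt hx hy hxy (hasDerivAt_cos x)
    rw [slope_def_field, div_le_iff₀ (sub_pos.2 hxy)] at h
    linarith
  · simp
  · have h := hconcave.le_slope_of_hasDerivAt hy hx hyx (hasDerivAt_cos x)
    rw [slope_def_field, le_div_iff₀ (sub_pos.2 hyx)] at h
    linarith

/-- The length of a taut string outside the sphere of radius `c` around the origin, running from a
point at distance `x` along a tangent segment and then along the sphere up to the hyperplane through
the origin orthogonal to that point. -/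
noncomputable def tautLength (c x : ℝ) : ℝ := √(x ^ 2 - c ^ 2) + c * arcsin (c / x)

lemma f_eq_tautLength_one : f = tautLength 1 := by
  ext x
  simp only [f, tautLength, one_pow, one_mul]

lemma tautLength_self {c : ℝ} (hc : c ≠ 0) : tautLength c c = c * (π / 2) := by
  simp [tautLength, div_self hc]

lemma mul_sin_arcsin_div {c x : ℝ} (hx : 0 < x) (hc : c ∈ Icc (-x) x) :
    x * sin (arcsin (c / x)) = c := by
  rw [sin_arcsin (by rw [le_div_iff₀ hx]; linarith [hc.1]) ((div_le_one hx).2 hc.2),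
    mul_div_cancel₀ c hx.ne']

lemma tautLength_eq_mul_cos_add {c x : ℝ} (hx : 0 < x) :
    tautLength c x = x * cos (arcsin (c / x)) + c * arcsin (c / x) := by
  have hsqrt : √(x ^ 2 - c ^ 2) = x * cos (arcsin (c / x)) := by
    rw [cos_arcsin, show x ^ 2 - c ^ 2 = x ^ 2 * (1 - (c / x) ^ 2) by field_simp,
      sqrt_mul (sq_nonneg x), sqrt_sq hx.le]
  rw [tautLength, hsqrt]

-- `c ↦ tautLength c x` is convex with derivative `arcsin (c / x)`.
lemma tautLength_add_mul_arcsin_le {c d x : ℝ} (hx : 0 < x) (hd : d ∈ Icc (-x) x) :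
    tautLength c x + (d - c) * arcsin (c / x) ≤ tautLength d x := by
  have htangent := mul_le_mul_of_nonneg_left
    (cos_le_cos_sub_mul_sin (arcsin_mem_Icc (d / x)) (arcsin_mem_Icc (c / x))) hx.le
  rw [tautLength_eq_mul_cos_add hx, tautLength_eq_mul_cos_add hx]
  linear_combination htangent + (arcsin (d / x) - arcsin (c / x)) * mul_sin_arcsin_div hx hd

lemma tautLength_one_add_le {c r s θ : ℝ} (hc : 1 ≤ c) (hr : c ≤ r) (hs : c ≤ s)
    (hθ : arccos (1 / r) + arccos (1 / s) ≤ θ) :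
    tautLength 1 r + tautLength 1 s + (θ - π) ≤
      tautLength c r + tautLength c s + c * (θ - π) := by
  have hr' := tautLength_add_mul_arcsin_le (c := 1) (d := c) (x := r) (by linarith)
    ⟨by linarith, hr⟩
  have hs' := tautLength_add_mul_arcsin_le (c := 1) (d := c) (x := s) (by linarith)
    ⟨by linarith, hs⟩
  have hslope : 0 ≤ (c - 1) * (arcsin (1 / r) + arcsin (1 / s) + (θ - π)) := by
    rw [arccos, arccos] at hθ
    exact mul_nonneg (by linarith) (by linarith)
  linarith

lemma m_pi {r s : ℝ} (hr : 0 < r) (hs : 0 < s) : m r s π = f r + f s := by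
  have hr' : arccos (1 / r) < π / 2 := arccos_lt_pi_div_two.2 (one_div_pos.2 hr)
  have hs' : arccos (1 / s) < π / 2 := arccos_lt_pi_div_two.2 (one_div_pos.2 hs)
  rw [m, if_neg (by linarith), sub_self, add_zero]

section Calibration

open InnerProductGeometry

variable {V : Type*} [NormedAddCommGroup V] [InnerProductSpace ℝ V]

-- The left-hand side is the component of `y - x` along the unit vector in the plane of `x` and `y`
-- at angle `φ` from `y` and `angle x y + φ` from `x`.
lemma norm_mul_cos_sub_norm_mul_cos_angle_add_le (x y : V) (φ : ℝ) :
    ‖y‖ * cos φ - ‖x‖ * cos (angle x y + φ) ≤ ‖x - y‖ := by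
  have hlaw :=
    norm_sub_sq_eq_norm_sq_add_norm_sq_sub_two_mul_norm_mul_norm_mul_cos_angle x y
  have hcos : cos (angle x y) = cos (angle x y + φ) * cos φ + sin (angle x y + φ) * sin φ := by
    rw [← cos_sub, add_sub_cancel_right]
  have hpythagoras : ‖x - y‖ ^ 2 = (‖y‖ * cos φ - ‖x‖ * cos (angle x y + φ)) ^ 2 +
      (‖y‖ * sin φ - ‖x‖ * sin (angle x y + φ)) ^ 2 := by
    linear_combination hlaw - 2 * ‖x‖ * ‖y‖ * hcos -
      ‖y‖ ^ 2 * sin_sq_add_cos_sq φ - ‖x‖ ^ 2 * sin_sq_add_cos_sq (angle x y + φ)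
  refine le_of_sq_le_sq ?_ (norm_nonneg _)
  rw [hpythagoras]
  exact le_add_of_nonneg_right (sq_nonneg _)

lemma tautLength_sub_add_mul_angle_le_norm_sub {c : ℝ} {x y : V} (hx : 0 < ‖x‖) (hy : 0 < ‖y‖)
    (hc : c ∈ Icc (-‖x‖) ‖x‖) (hangle : angle x y ≤ arccos (c / ‖y‖)) :
    tautLength c ‖y‖ - tautLength c ‖x‖ + c * angle x y ≤ ‖x - y‖ := by
  set θ := angle x y
  set α := arcsin (c / ‖x‖)
  set β := arcsin (c / ‖y‖) with hβ
  have hmem : θ + β ∈ Icc (-(π / 2)) (π / 2) := by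
    rw [arccos, ← hβ] at hangle
    exact ⟨by linarith [angle_nonneg x y, neg_pi_div_two_le_arcsin (c / ‖y‖)], by linarith⟩
  have htangent := mul_le_mul_of_nonneg_left
    (cos_le_cos_sub_mul_sin (arcsin_mem_Icc (c / ‖x‖)) hmem) hx.le
  calc tautLength c ‖y‖ - tautLength c ‖x‖ + c * θ
      = ‖y‖ * cos β - ‖x‖ * (cos α - (θ + β - α) * sin α) := by
        rw [tautLength_eq_mul_cos_add hx, tautLength_eq_mul_cos_add hy]
        linear_combination -(θ + β - α) * mul_sin_arcsin_div hx hc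
    _ ≤ ‖y‖ * cos β - ‖x‖ * cos (θ + β) := sub_le_sub_left htangent _
    _ ≤ ‖x - y‖ := norm_mul_cos_sub_norm_mul_cos_angle_add_le x y β

/-- A calibration for curves around the ball of radius `c`, centred at the direction of `q`: outside
the ball its gradient has norm one wherever it is differentiable, so its change along a curve bounds
the length of the curve from below. -/
noncomputable def tautCalibration (c : ℝ) (q x : V) : ℝ := tautLength c ‖x‖ + c * angle q x

lemma continuous_tautCalibration_left (q x : V) : Continuous fun c ↦ tautCalibration c q x := by
  unfold tautCalibration tautLength
  fun_prop

lemma exists_mem_nhds_lipschitzOnWith_tautCalibration {c : ℝ} (hc : 0 ≤ c) (q : V) {x₀ : V}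
    (hx₀ : c < ‖x₀‖) : ∃ U ∈ 𝓝 x₀, LipschitzOnWith 1 (tautCalibration c q) U := by
  have hpos : 0 < ‖x₀‖ := hc.trans_lt hx₀
  have hx₀0 : x₀ ≠ 0 := norm_pos_iff.1 hpos
  have hnear : ∀ᶠ p : V × V in 𝓝 x₀ ×ˢ 𝓝 x₀,
      angle p.1 p.2 < arccos (c / ‖p.2‖) ∧ c < ‖p.2‖ := by
    rw [← nhds_prod_eq]
    have hangle : ContinuousAt (fun p : V × V ↦ angle p.1 p.2) (x₀, x₀) :=
      continuousAt_angle hx₀0 hx₀0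
    have harccos : ContinuousAt (fun p : V × V ↦ arccos (c / ‖p.2‖)) (x₀, x₀) :=
      continuous_arccos.continuousAt.comp
        (continuousAt_const.div continuousAt_snd.norm hpos.ne')
    refine (hangle.eventually_lt harccos ?_).and
      (continuousAt_const.eventually_lt continuousAt_snd.norm hx₀)
    rw [angle_self hx₀0]
    exact arccos_pos.2 ((div_lt_one hpos).2 hx₀)
  obtain ⟨U, hU, hUnear⟩ := eventually_prod_self_iff'.1 hnear
  refine ⟨U, hU, LipschitzOnWith.of_le_add fun y hy x hx ↦ ?_⟩
  have hcx : c < ‖x‖ := (hUnear x hx x hx).2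
  obtain ⟨hxy, hcy⟩ := hUnear x hx y hy
  have hlocal := tautLength_sub_add_mul_angle_le_norm_sub (hc.trans_lt hcx) (hc.trans_lt hcy)
    ⟨by linarith, hcx.le⟩ hxy.le
  have htriangle := mul_le_mul_of_nonneg_left (angle_le_angle_add_angle q x y) hc
  rw [dist_comm, dist_eq_norm, tautCalibration, tautCalibration]
  linarith

section Curve

variable {γ : ℝ → V} {a b c : ℝ}

-- The calibration is not locally 1-Lipschitz at points of the sphere of radius `c`, so the radius
-- is increased to `c` from below.
lemma edist_tautCalibration_le_eVariationOn (hab : a ≤ b) (hγ : ContinuousOn γ (Icc a b))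
    (hc : 0 < c) (hout : ∀ t ∈ Icc a b, c ≤ ‖γ t‖) (q : V) :
    edist (tautCalibration c q (γ a)) (tautCalibration c q (γ b)) ≤
      eVariationOn γ (Icc a b) := by
  have hlim : Tendsto (fun d ↦ edist (tautCalibration d q (γ a)) (tautCalibration d q (γ b)))
      (𝓝[<] c) (𝓝 (edist (tautCalibration c q (γ a)) (tautCalibration c q (γ b)))) :=
    (((continuous_tautCalibration_left q (γ a)).edist
      (continuous_tautCalibration_left q (γ b))).tendsto c).mono_left nhdsWithin_le_nhds
  refine le_of_tendsto hlim ?_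
  filter_upwards [Ioo_mem_nhdsLT hc] with d hd
  simpa only [NNReal.coe_one, ENNReal.coe_one, one_mul] using
    edist_le_mul_eVariationOn_of_locally_lipschitz hab hγ fun t ht ↦
      exists_mem_nhds_lipschitzOnWith_tautCalibration hd.1.le q (hd.2.trans_le (hout t ht))

lemma ofReal_tautLength_add_le_eVariationOn_of_isMinOn (hγ : ContinuousOn γ (Icc a b)) {t₀ : ℝ}
    (ht₀ : t₀ ∈ Icc a b) (hmin : IsMinOn (fun t ↦ ‖γ t‖) (Icc a b) t₀) (hc : 0 < c)
    (hct₀ : ‖γ t₀‖ = c) :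
    ENNReal.ofReal (tautLength c ‖γ a‖ + tautLength c ‖γ b‖ + c * (angle (γ a) (γ b) - π)) ≤
      eVariationOn γ (Icc a b) := by
  have hout : ∀ t ∈ Icc a b, c ≤ ‖γ t‖ := fun t ht ↦ hct₀ ▸ hmin ht
  have hsubl : Icc a t₀ ⊆ Icc a b := Icc_subset_Icc_right ht₀.2
  have hsubr : Icc t₀ b ⊆ Icc a b := Icc_subset_Icc_left ht₀.1
  let G := tautCalibration c (γ t₀)
  have hGt₀ : G (γ t₀) = c * (π / 2) := by
    have hγt₀ : γ t₀ ≠ 0 := norm_pos_iff.1 (hct₀ ▸ hc)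
    simp only [G, tautCalibration, hct₀, tautLength_self hc.ne', angle_self hγt₀, mul_zero,
      add_zero]
  have hofReal (x : V) : ENNReal.ofReal (G x - c * (π / 2)) ≤ edist (G x) (G (γ t₀)) := by
    rw [hGt₀, edist_dist, Real.dist_eq]
    exact ENNReal.ofReal_le_ofReal (le_abs_self _)
  calc ENNReal.ofReal (tautLength c ‖γ a‖ + tautLength c ‖γ b‖ + c * (angle (γ a) (γ b) - π))
      ≤ ENNReal.ofReal ((G (γ a) - c * (π / 2)) + (G (γ b) - c * (π / 2))) := by
        refine ENNReal.ofReal_le_ofReal ?_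
        have htriangle := mul_le_mul_of_nonneg_left
          (angle_le_angle_add_angle (γ a) (γ t₀) (γ b)) hc.le
        rw [angle_comm (γ a) (γ t₀)] at htriangle
        simp only [G, tautCalibration]
        linarith
    _ ≤ ENNReal.ofReal (G (γ a) - c * (π / 2)) + ENNReal.ofReal (G (γ b) - c * (π / 2)) :=
        ENNReal.ofReal_add_le
    _ ≤ edist (G (γ a)) (G (γ t₀)) + edist (G (γ t₀)) (G (γ b)) := by
        rw [edist_comm (G (γ t₀)) (G (γ b))]
        exact add_le_add (hofReal _) (hofReal _)
    _ ≤ eVariationOn γ (Icc a t₀) + eVariationOn γ (Icc t₀ b) := add_le_add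
        (edist_tautCalibration_le_eVariationOn ht₀.1 (hγ.mono hsubl) hc
          (fun t ht ↦ hout t (hsubl ht)) _)
        (edist_tautCalibration_le_eVariationOn ht₀.2 (hγ.mono hsubr) hc
          (fun t ht ↦ hout t (hsubr ht)) _)
    _ = eVariationOn γ (Icc a b) := by
        simpa only [univ_inter] using eVariationOn.Icc_add_Icc γ ht₀.1 ht₀.2 (mem_univ t₀)

lemma ofReal_f_add_le_eVariationOn (hab : a ≤ b) (hγ : ContinuousOn γ (Icc a b))
    (hout : ∀ t ∈ Icc a b, 1 ≤ ‖γ t‖)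
    (hangle : arccos (1 / ‖γ a‖) + arccos (1 / ‖γ b‖) ≤ angle (γ a) (γ b)) :
    ENNReal.ofReal (f ‖γ a‖ + f ‖γ b‖ + (angle (γ a) (γ b) - π)) ≤ eVariationOn γ (Icc a b) := by
  obtain ⟨t₀, ht₀, hmin⟩ := isCompact_Icc.exists_isMinOn (nonempty_Icc.2 hab) hγ.norm
  have ht₀1 := hout t₀ ht₀
  rw [f_eq_tautLength_one]
  exact (ENNReal.ofReal_le_ofReal (tautLength_one_add_le ht₀1 (hmin (left_mem_Icc.2 hab))
    (hmin (right_mem_Icc.2 hab)) hangle)).trans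
    (ofReal_tautLength_add_le_eVariationOn_of_isMinOn hγ ht₀ hmin (one_pos.trans_le ht₀1) rfl)

lemma ofReal_m_le_eVariationOn (hab : a ≤ b) (hγ : ContinuousOn γ (Icc a b))
    (hout : ∀ t ∈ Icc a b, 1 ≤ ‖γ t‖) :
    ENNReal.ofReal (m ‖γ a‖ ‖γ b‖ (angle (γ a) (γ b))) ≤ eVariationOn γ (Icc a b) := by
  rw [m]
  split_ifs with hangle
  · have hchord : √(‖γ a‖ ^ 2 + ‖γ b‖ ^ 2 - 2 * ‖γ a‖ * ‖γ b‖ * cos (angle (γ a) (γ b))) =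
        dist (γ a) (γ b) := by
      rw [dist_eq_norm, ← sqrt_sq (norm_nonneg (γ a - γ b)), sq ‖γ a - γ b‖,
        norm_sub_sq_eq_norm_sq_add_norm_sq_sub_two_mul_norm_mul_norm_mul_cos_angle]
      simp only [sq]
    rw [hchord, ← edist_dist]
    exact eVariationOn.edist_le γ (left_mem_Icc.2 hab) (right_mem_Icc.2 hab)
  · exact ofReal_f_add_le_eVariationOn hab hγ hout (not_le.1 hangle).le

end Curve

end Calibration

open EuclideanGeometry

theorem stmt2_general {V P : Type*} [NormedAddCommGroup V] [InnerProductSpace ℝ V]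
    [MetricSpace P] [NormedAddTorsor V P] (p : P) {γ : ℝ → P} {t₀ t₁ : ℝ} (ht : t₀ ≤ t₁)
    (hcont : ContinuousOn γ (Icc t₀ t₁)) (hout : ∀ t ∈ Icc t₀ t₁, 1 ≤ dist (γ t) p) :
    ENNReal.ofReal (m (dist (γ t₀) p) (dist (γ t₁) p) (∠ (γ t₀) p (γ t₁))) ≤
      eVariationOn γ (Icc t₀ t₁) := by
  have hvar : eVariationOn (fun t ↦ γ t -ᵥ p) (Icc t₀ t₁) = eVariationOn γ (Icc t₀ t₁) := by
    simp only [eVariationOn, edist_dist, dist_vsub_cancel_right]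
  simp only [dist_eq_norm_vsub V] at hout
  have h := ofReal_m_le_eVariationOn ht (hcont.vsub (continuousOn_const (c := p))) hout
  rw [hvar] at h
  simpa only [dist_eq_norm_vsub V, EuclideanGeometry.angle] using h

section OppositeRays

variable {V : Type*} [NormedAddCommGroup V] [InnerProductSpace ℝ V]

lemma angle_add_smul_sub_smul (p : V) {u : V} (hu : u ≠ 0) {r s : ℝ} (hr : 0 < r) (hs : 0 < s) :
    ∠ (p + r • u) p (p - s • u) = π := by
  rw [EuclideanGeometry.angle, vsub_eq_sub, vsub_eq_sub, add_sub_cancel_left, sub_sub_cancel_left,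
    ← neg_smul, InnerProductGeometry.angle_smul_left_of_pos _ _ hr,
    InnerProductGeometry.angle_smul_right_of_neg _ _ (neg_neg_of_pos hs),
    InnerProductGeometry.angle_self_neg_of_nonzero hu]

lemma m_dist_angle_add_smul_sub_smul (p : V) {u : V} (hu : ‖u‖ = 1) {r s : ℝ} (hr : 0 < r)
    (hs : 0 < s) :
    m (dist (p + r • u) p) (dist (p - s • u) p) (∠ (p + r • u) p (p - s • u)) = f r + f s := by
  have hdist_add : dist (p + r • u) p = r := by simp [norm_smul, hu, abs_of_pos hr]
  have hdist_sub : dist (p - s • u) p = s := by simp [norm_smul, hu, abs_of_pos hs]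
  have hu0 : u ≠ 0 := norm_ne_zero_iff.1 (hu ▸ one_ne_zero)
  rw [hdist_add, hdist_sub, angle_add_smul_sub_smul p hu0 hr hs, m_pi hr hs]

end OppositeRays

/-- If `a` and `b` lie at distances `r,s ≥ 1` along opposite rays from `p`, then any
arc from `a` to `b` avoiding the open unit ball `B(p)` has length at least `f(r)+f(s)`. -/
theorem stmt2 (p a b : E3) (r s : ℝ) (hr : 1 ≤ r) (hs : 1 ≤ s)
    (u : E3) (hu : ‖u‖ = 1) (ha : a = p + r • u) (hb : b = p - s • u)
    (γ : ℝ → E3) (hcont : ContinuousOn γ (Set.Icc 0 1))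
    (hγa : γ 0 = a) (hγb : γ 1 = b)
    (hout : ∀ t ∈ Set.Icc (0:ℝ) 1, 1 ≤ dist (γ t) p) :
    ENNReal.ofReal (f r + f s) ≤ eVariationOn γ (Set.Icc 0 1) := by
  rw [← m_dist_angle_add_smul_sub_smul p hu (one_pos.trans_le hr) (one_pos.trans_le hs), ← ha, ← hb,
    ← hγa, ← hγb]
  exact stmt2_general p zero_le_one hcont hout
end

section
/- Let K be a closed curve of unit thickness and let a, b ∈ K with 0 < |a-b| < 1. Then the closed ball with diameter segment ab intersects K in a single subarc (one of the two subarcs from a to b), and that subarc has length at most arcsin|a-b|. -/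
open Real Set

/-!
By the law of sines, unit thickness says that `sin ∠ a c b ≤ |ab|` for all distinct `a`, `b`, `c`
on the curve. When `|ab| < 1` no such angle is right, so by Thales each of the two arcs between `a`
and `b` lies either inside the open ball with diameter `ab` or outside the closed one. At points
`c₁`, `c₂` of the two arcs equally close to `b` the chords `bc₁` and `bc₂` must be nearly opposite,
whereas the angles they make with `ba` are at most `arcsin |ab|` (inside) or nearly at least
`π - arcsin |ab|` (outside). Hence exactly one of the arcs is inside. Since a triangle has at most
one obtuse angle, the sub-arcs of an inside arc are inside with respect to their own endpoints.
Finally, if `c` is a point of an inside arc and `α`, `β` are the angles of the triangle at `a` and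
`b`, then `sin α ≤ |cb|` and `sin β ≤ |ac|`, so
`sin (arcsin |ac| + arcsin |cb|) = |ac| √(1 - |cb|²) + |cb| √(1 - |ac|²) ≤ |ac| cos α + |cb| cos β`,
which is `|ab|`. So `arcsin` of the chord is superadditive along the arc and bounds its length.
-/

open Filter Topology
open scoped EuclideanGeometry ENNReal

section Real

lemma le_arcsin_self {x : ℝ} (hx₀ : 0 ≤ x) (hx₁ : x ≤ 1) : x ≤ arcsin x := by
  simpa only [sin_arcsin (by linarith) hx₁] using sin_le (arcsin_nonneg.2 hx₀)

lemma arcsin_add_arcsin_le_pi_div_two {x y : ℝ} (hx : 0 ≤ x) (h : x ^ 2 + y ^ 2 ≤ 1) :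
    arcsin x + arcsin y ≤ π / 2 := by
  have hy : arcsin y ≤ arccos x := by
    rw [arccos_eq_arcsin hx]
    exact arcsin_le_arcsin (le_sqrt_of_sq_le (by linarith))
  linarith [arccos_eq_pi_div_two_sub_arcsin x]

lemma sin_arcsin_add_arcsin {x y : ℝ} (hx₀ : -1 ≤ x) (hx₁ : x ≤ 1) (hy₀ : -1 ≤ y) (hy₁ : y ≤ 1) :
    sin (arcsin x + arcsin y) = x * √(1 - y ^ 2) + y * √(1 - x ^ 2) := by
  rw [sin_add, sin_arcsin hx₀ hx₁, sin_arcsin hy₀ hy₁, cos_arcsin, cos_arcsin]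
  ring

lemma sqrt_one_sub_sq_le_cos {x θ : ℝ} (hx : sin θ ≤ x) (hθ₀ : 0 ≤ θ) (hθ : θ ≤ π / 2) :
    √(1 - x ^ 2) ≤ cos θ := by
  have hsin : 0 ≤ sin θ := sin_nonneg_of_nonneg_of_le_pi hθ₀ (by linarith [pi_pos])
  rw [cos_eq_sqrt_one_sub_sin_sq (by linarith [pi_pos]) hθ]
  gcongr

lemma exists_pos_lt_four_mul_arcsin_lt {δ ε : ℝ} (hδ : 0 < δ) (hε : 0 < ε) :
    ∃ r, 0 < r ∧ r < δ ∧ 4 * arcsin r < ε := by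
  have htendsto : Tendsto (fun r ↦ 4 * arcsin r) (𝓝[>] 0) (𝓝 0) := by
    refine Tendsto.mono_left ?_ nhdsWithin_le_nhds
    exact (by fun_prop : Continuous fun r ↦ 4 * arcsin r).tendsto' 0 0 (by simp)
  obtain ⟨r, hr, hr'⟩ :=
    (Filter.Eventually.and (Ioo_mem_nhdsGT hδ) (htendsto.eventually_lt_const hε)).exists
  exact ⟨r, hr.1, hr.2, hr'⟩

end Real

lemma eVariationOn_Icc_le_of_superadditive {α E : Type*} [LinearOrder α] [PseudoEMetricSpace E]
    {u : α → E} {φ : α → α → ℝ≥0∞} {a b : α}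
    (hu : ∀ ⦃x y⦄, a ≤ x → x ≤ y → y ≤ b → edist (u x) (u y) ≤ φ x y)
    (hφ : ∀ ⦃x y z⦄, a ≤ x → x ≤ y → y ≤ z → z ≤ b → φ x y + φ y z ≤ φ x z) :
    eVariationOn u (Icc a b) ≤ φ a b := by
  refine iSup_le fun ⟨n, p, hp, hmem⟩ ↦ ?_
  have hsum : ∀ k, ∑ i ∈ Finset.range k, edist (u (p (i + 1))) (u (p i)) ≤ φ a (p k) := by
    intro k
    induction k with
    | zero => simp
    | succ k ih =>
      have hk : p k ≤ p (k + 1) := hp k.le_succ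
      rw [Finset.sum_range_succ, edist_comm]
      exact (add_le_add ih (hu (hmem k).1 hk (hmem _).2)).trans
        (hφ le_rfl (hmem k).1 hk (hmem _).2)
  exact (hsum n).trans (le_self_add.trans (hφ le_rfl (hmem n).1 (hmem n).2 le_rfl))

lemma injOn_Ico_add_of_periodic {α β : Type*} [AddCommGroup α] [LinearOrder α]
    [IsOrderedAddMonoid α] [Archimedean α] {u : α → β} {p : α} (hp : 0 < p)
    (hu : Function.Periodic u p) {a : α} (hinj : InjOn u (Ico a (a + p))) (b : α) :
    InjOn u (Ico b (b + p)) := by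
  have hmod : ∀ x, u (toIcoMod hp a x) = u x := fun x ↦ by
    rw [← self_sub_toIcoDiv_zsmul]
    exact hu.sub_zsmul_eq _
  intro x hx y hy hxy
  have h : toIcoMod hp a x = toIcoMod hp a y :=
    hinj (toIcoMod_mem_Ico hp a x) (toIcoMod_mem_Ico hp a y) (by rw [hmod, hmod, hxy])
  rw [← (toIcoMod_eq_self hp).2 hx, ← (toIcoMod_eq_self hp).2 hy]
  exact (toIcoMod_inj hp).2 ((toIcoMod_inj hp).1 h)

section Angle

variable {V P : Type*} [NormedAddCommGroup V] [InnerProductSpace ℝ V] [MetricSpace P]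
  [NormedAddTorsor V P] {a b c : P}

lemma ne_left_of_pi_div_two_lt_angle (h : π / 2 < ∠ a c b) : a ≠ c := by
  rintro rfl
  simp at h

lemma ne_right_of_pi_div_two_lt_angle (h : π / 2 < ∠ a c b) : b ≠ c := by
  rintro rfl
  simp at h

lemma pi_div_two_le_angle_iff :
    π / 2 ≤ ∠ a c b ↔ dist a c ^ 2 + dist b c ^ 2 ≤ dist a b ^ 2 := by
  have hcos := EuclideanGeometry.law_cos a c b
  constructor
  · intro h
    have hcos_nonpos : cos (∠ a c b) ≤ 0 :=
      cos_nonpos_of_pi_div_two_le_of_le h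
        (by linarith [EuclideanGeometry.angle_le_pi a c b, pi_pos])
    have : 0 ≤ dist a c * dist b c * -cos (∠ a c b) :=
      mul_nonneg (by positivity) (neg_nonneg.2 hcos_nonpos)
    linarith
  · contrapose!
    intro h
    have hac : 0 < dist a c := dist_pos.2 (by rintro rfl; simp at h)
    have hbc : 0 < dist b c := dist_pos.2 (by rintro rfl; simp at h)
    have hcos_pos : 0 < cos (∠ a c b) :=
      cos_pos_of_mem_Ioo ⟨by linarith [EuclideanGeometry.angle_nonneg a c b, pi_pos], h⟩
    have : 0 < dist a c * dist b c * cos (∠ a c b) := by positivity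
    linarith

lemma mem_closedBall_midpoint_iff :
    c ∈ Metric.closedBall (midpoint ℝ a b) (dist a b / 2) ↔ π / 2 ≤ ∠ a c b := by
  have h := EuclideanGeometry.dist_sq_add_dist_sq_eq_two_mul_dist_midpoint_sq_add_half_dist_sq c a b
  rw [pi_div_two_le_angle_iff, Metric.mem_closedBall, ← sq_le_sq₀ dist_nonneg (by positivity),
    dist_comm a c, dist_comm b c]
  constructor <;> intro <;> linarith

lemma dist_lt_of_pi_div_two_lt_angle (h : π / 2 < ∠ a c b) : dist a c < dist a b := by
  have hbc : 0 < dist b c := dist_pos.2 (ne_right_of_pi_div_two_lt_angle h)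
  have := pi_div_two_le_angle_iff.1 h.le
  exact lt_of_pow_lt_pow_left₀ 2 dist_nonneg (by nlinarith)

lemma angle_lt_pi_div_two_of_dist_lt (h : dist a c < dist a b) : ∠ a b c < π / 2 := by
  contrapose! h
  have := pi_div_two_le_angle_iff.1 h
  exact le_of_sq_le_sq (by nlinarith) dist_nonneg

lemma angle_add_angle_add_angle_le_two_pi (a b c p : P) :
    ∠ a p b + ∠ b p c + ∠ c p a ≤ 2 * π := by
  have h := InnerProductGeometry.angle_le_angle_add_angle (a -ᵥ p) (-(b -ᵥ p)) (c -ᵥ p)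
  rw [InnerProductGeometry.angle_neg_right, InnerProductGeometry.angle_neg_left] at h
  rw [EuclideanGeometry.angle_comm c p a]
  simp only [EuclideanGeometry.angle]
  linarith

lemma dist_mul_cos_angle_add_dist_mul_cos_angle (hab : a ≠ b) :
    dist a c * cos (∠ c a b) + dist c b * cos (∠ c b a) = dist a b := by
  have hca := EuclideanGeometry.law_cos c a b
  have hcb := EuclideanGeometry.law_cos c b a
  rw [dist_comm c a, dist_comm b a] at hca
  rw [dist_comm c a] at hcb
  refine mul_left_cancel₀ (dist_pos.2 hab).ne' ?_
  linarith

end Angle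

/-- Thickness at least `1`, as in `ThickOne`, for a subset of an arbitrary metric space. -/
def IsUnitThick {P : Type*} [MetricSpace P] (K : Set P) : Prop :=
  ∀ x ∈ K, ∀ y ∈ K, ∀ z ∈ K, x ≠ y → y ≠ z → x ≠ z →
    ∀ (c : P) (ρ : ℝ), dist x c = ρ → dist y c = ρ → dist z c = ρ → 1 / 2 ≤ ρ

namespace IsUnitThick

variable {V P : Type*} [NormedAddCommGroup V] [InnerProductSpace ℝ V] [MetricSpace P]
  [NormedAddTorsor V P] {K : Set P} {a b c c₁ c₂ : P}

lemma sin_angle_le_dist (hK : IsUnitThick K) (ha : a ∈ K) (hb : b ∈ K) (hc : c ∈ K)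
    (hac : a ≠ c) (hbc : b ≠ c) : sin (∠ a c b) ≤ dist a b := by
  by_cases hcol : Collinear ℝ {a, c, b}
  · rcases EuclideanGeometry.collinear_iff_eq_or_eq_or_sin_eq_zero.1 hcol with h | h | h
    · exact absurd h hac
    · exact absurd h hbc
    · exact h ▸ dist_nonneg
  let T : Affine.Triangle ℝ P := ⟨![a, c, b], affineIndependent_iff_not_collinear_set.2 hcol⟩
  have hsin : dist a b / sin (∠ a c b) = 2 * T.circumradius :=
    T.dist_div_sin_angle_eq_two_mul_circumradius (i₁ := 0) (i₂ := 1) (i₃ := 2)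
      (by decide) (by decide) (by decide)
  have hradius : 1 / 2 ≤ T.circumradius :=
    hK a ha c hc b hb hac hbc.symm (by rintro rfl; exact hcol (by simp [collinear_pair]))
      T.circumcenter T.circumradius (T.dist_circumcenter_eq_circumradius 0)
      (T.dist_circumcenter_eq_circumradius 1) (T.dist_circumcenter_eq_circumradius 2)
  have hsin_pos : 0 < sin (∠ a c b) := EuclideanGeometry.sin_pos_of_not_collinear hcol
  exact (one_le_div hsin_pos).1 (by linarith)

lemma angle_ne_pi_div_two (hK : IsUnitThick K) (ha : a ∈ K) (hb : b ∈ K) (hc : c ∈ K)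
    (hac : a ≠ c) (hbc : b ≠ c) (hab : dist a b < 1) : ∠ a c b ≠ π / 2 := by
  intro h
  have := hK.sin_angle_le_dist ha hb hc hac hbc
  rw [h, sin_pi_div_two] at this
  exact this.not_gt hab

lemma angle_le_arcsin_dist (hK : IsUnitThick K) (ha : a ∈ K) (hb : b ∈ K) (hc : c ∈ K)
    (hac : a ≠ c) (hbc : b ≠ c) (h : ∠ a c b ≤ π / 2) : ∠ a c b ≤ arcsin (dist a b) :=
  calc ∠ a c b = arcsin (sin (∠ a c b)) :=
        (arcsin_sin (by linarith [EuclideanGeometry.angle_nonneg a c b, pi_pos]) h).symm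
    _ ≤ arcsin (dist a b) := arcsin_le_arcsin (hK.sin_angle_le_dist ha hb hc hac hbc)

lemma pi_sub_angle_le_arcsin_dist (hK : IsUnitThick K) (ha : a ∈ K) (hb : b ∈ K) (hc : c ∈ K)
    (h : π / 2 < ∠ a c b) : π - ∠ a c b ≤ arcsin (dist a b) :=
  calc π - ∠ a c b = arcsin (sin (π - ∠ a c b)) :=
        (arcsin_sin (by linarith [EuclideanGeometry.angle_le_pi a c b, pi_pos]) (by linarith)).symm
    _ ≤ arcsin (dist a b) := by
        rw [sin_pi_sub]
        exact arcsin_le_arcsin (hK.sin_angle_le_dist ha hb hc (ne_left_of_pi_div_two_lt_angle h)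
          (ne_right_of_pi_div_two_lt_angle h))

lemma angle_le_arcsin_dist_of_pi_div_two_lt (hK : IsUnitThick K) (ha : a ∈ K) (hb : b ∈ K)
    (hc : c ∈ K) (h : π / 2 < ∠ a c b) : ∠ c b a ≤ arcsin (dist a b) := by
  have hsum := EuclideanGeometry.angle_add_angle_add_angle_eq_pi b
    (ne_left_of_pi_div_two_lt_angle h).symm
  have := hK.pi_sub_angle_le_arcsin_dist ha hb hc h
  linarith [EuclideanGeometry.angle_nonneg b a c]

lemma pi_sub_angle_le_of_angle_lt_pi_div_two (hK : IsUnitThick K) (ha : a ∈ K) (hb : b ∈ K)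
    (hc : c ∈ K) (hac : a ≠ c) (hbc : b ≠ c) (h : ∠ a c b < π / 2) (hlt : dist b c < dist b a) :
    π - ∠ c b a ≤ arcsin (dist a b) + arcsin (dist c b) := by
  have hab : a ≠ b := by
    rintro rfl
    simp [dist_nonneg.not_gt] at hlt
  have hsum := EuclideanGeometry.angle_add_angle_add_angle_eq_pi b hac.symm
  have hangle_a : ∠ b a c ≤ arcsin (dist b c) :=
    hK.angle_le_arcsin_dist hb hc ha hab.symm hac.symm (angle_lt_pi_div_two_of_dist_lt hlt).le
  rw [dist_comm b c] at hangle_a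
  linarith [hK.angle_le_arcsin_dist ha hb hc hac hbc h.le]

lemma pi_sub_angle_le_of_dist_eq (hK : IsUnitThick K) (hb : b ∈ K) (hc₁ : c₁ ∈ K) (hc₂ : c₂ ∈ K)
    (hc : c₁ ≠ c₂) (hbc : b ≠ c₁) (h : dist b c₁ = dist b c₂) :
    π - ∠ c₁ b c₂ ≤ 2 * arcsin (dist b c₂) := by
  have hsum := EuclideanGeometry.angle_add_angle_add_angle_eq_pi c₂ hbc.symm
  have hbase : ∠ b c₁ c₂ = ∠ b c₂ c₁ := EuclideanGeometry.angle_eq_angle_of_dist_eq h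
  rw [EuclideanGeometry.angle_comm c₁ c₂, EuclideanGeometry.angle_comm c₂ b] at hsum
  have := hK.angle_le_arcsin_dist hb hc₂ hc₁ hbc hc.symm
    (by linarith [EuclideanGeometry.angle_nonneg c₁ b c₂])
  linarith

lemma arcsin_dist_add_arcsin_dist_le (hK : IsUnitThick K) (ha : a ∈ K) (hb : b ∈ K) (hc : c ∈ K)
    (hab : dist a b ≤ 1) (h : π / 2 < ∠ a c b) :
    arcsin (dist a c) + arcsin (dist c b) ≤ arcsin (dist a b) := by
  have hac : a ≠ c := ne_left_of_pi_div_two_lt_angle h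
  have hbc : b ≠ c := ne_right_of_pi_div_two_lt_angle h
  have hab_ne : a ≠ b := by
    rintro rfl
    have := dist_lt_of_pi_div_two_lt_angle h
    simp [dist_nonneg.not_gt] at this
  have hsum := EuclideanGeometry.angle_add_angle_add_angle_eq_pi b hac.symm
  rw [EuclideanGeometry.angle_comm b a c] at hsum
  have hα := EuclideanGeometry.angle_nonneg c a b
  have hβ := EuclideanGeometry.angle_nonneg c b a
  have hcos_a : √(1 - dist c b ^ 2) ≤ cos (∠ c a b) :=
    sqrt_one_sub_sq_le_cos (hK.sin_angle_le_dist hc hb ha hac.symm hab_ne.symm) hα (by linarith)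
  have hcos_b : √(1 - dist a c ^ 2) ≤ cos (∠ c b a) :=
    sqrt_one_sub_sq_le_cos (dist_comm a c ▸ hK.sin_angle_le_dist hc ha hb hbc.symm hab_ne) hβ
      (by linarith)
  have hsq : dist a c ^ 2 + dist c b ^ 2 ≤ 1 := by
    rw [dist_comm c b]
    exact (pi_div_two_le_angle_iff.1 h.le).trans (pow_le_one₀ dist_nonneg hab)
  have hac_nonneg : 0 ≤ dist a c := dist_nonneg
  have hcb_nonneg : 0 ≤ dist c b := dist_nonneg
  have hle := arcsin_add_arcsin_le_pi_div_two hac_nonneg hsq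
  rw [le_arcsin_iff_sin_le'
      ⟨by linarith [pi_pos, arcsin_nonneg.2 hac_nonneg, arcsin_nonneg.2 hcb_nonneg], hle⟩,
    sin_arcsin_add_arcsin (by linarith) (by nlinarith) (by linarith) (by nlinarith)]
  calc dist a c * √(1 - dist c b ^ 2) + dist c b * √(1 - dist a c ^ 2)
      ≤ dist a c * cos (∠ c a b) + dist c b * cos (∠ c b a) := by gcongr
    _ = dist a b := dist_mul_cos_angle_add_dist_mul_cos_angle hab_ne

end IsUnitThick

/-- A simple closed curve `γ` of period `L` whose trace has thickness at least `1`. The arcs of the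
curve are the images of the intervals `[s, t]` with `t < s + L`; the arc complementary to `[s, t]`
is `[t, s + L]`. -/
structure IsUnitThickLoop {P : Type*} [MetricSpace P] (γ : ℝ → P) (L : ℝ) : Prop where
  pos : 0 < L
  continuous : Continuous γ
  periodic : Function.Periodic γ L
  injOn : InjOn γ (Ico 0 L)
  isUnitThick : IsUnitThick (range γ)

section Arc

variable {V P : Type*} [NormedAddCommGroup V] [InnerProductSpace ℝ V] [MetricSpace P]
  [NormedAddTorsor V P] {γ : ℝ → P} {L s t x y : ℝ}

/-- The open arc of `γ` between the parameters `s` and `t` lies in the open ball with diameter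
`γ s`, `γ t`, encoded through Thales' theorem as an obtuse angle at each of its points. -/
def IsInnerArc (γ : ℝ → P) (s t : ℝ) : Prop :=
  ∀ x ∈ Ioo s t, π / 2 < ∠ (γ s) (γ x) (γ t)

/-- The open arc of `γ` between the parameters `s` and `t` lies outside the closed ball with
diameter `γ s`, `γ t`, encoded through Thales' theorem as an acute angle at each of its points. -/
def IsOuterArc (γ : ℝ → P) (s t : ℝ) : Prop :=
  ∀ x ∈ Ioo s t, ∠ (γ s) (γ x) (γ t) < π / 2

namespace IsInnerArc

lemma dist_left_le (h : IsInnerArc γ s t) (hx : x ∈ Icc s t) :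
    dist (γ s) (γ x) ≤ dist (γ s) (γ t) := by
  rcases eq_endpoints_or_mem_Ioo_of_mem_Icc hx with rfl | rfl | hx
  · simp
  · rfl
  · exact (dist_lt_of_pi_div_two_lt_angle (h x hx)).le

lemma dist_right_le (h : IsInnerArc γ s t) (hx : x ∈ Icc s t) :
    dist (γ x) (γ t) ≤ dist (γ s) (γ t) := by
  rcases eq_endpoints_or_mem_Ioo_of_mem_Icc hx with rfl | rfl | hx
  · rfl
  · simp
  · rw [dist_comm, dist_comm (γ s)]
    exact (dist_lt_of_pi_div_two_lt_angle (by rw [EuclideanGeometry.angle_comm]; exact h x hx)).le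

lemma arcsin_dist_add_arcsin_dist_le (hK : IsUnitThick (range γ)) (h : IsInnerArc γ s t)
    (hd : dist (γ s) (γ t) ≤ 1) (hx : x ∈ Icc s t) :
    arcsin (dist (γ s) (γ x)) + arcsin (dist (γ x) (γ t)) ≤ arcsin (dist (γ s) (γ t)) := by
  rcases eq_endpoints_or_mem_Ioo_of_mem_Icc hx with rfl | rfl | hx
  · simp
  · simp
  · exact hK.arcsin_dist_add_arcsin_dist_le (mem_range_self s) (mem_range_self t)
      (mem_range_self x) hd (h x hx)

end IsInnerArc

namespace IsUnitThickLoop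

lemma ne_of_lt (hγ : IsUnitThickLoop γ L) (hst : s < t) (htL : t < s + L) : γ s ≠ γ t := by
  have hinj : InjOn γ (Ico s (s + L)) :=
    injOn_Ico_add_of_periodic hγ.pos hγ.periodic (a := 0)
      (by simpa only [zero_add] using hγ.injOn) s
  exact hinj.ne ⟨le_rfl, by linarith⟩ ⟨hst.le, htL⟩ hst.ne

lemma isInnerArc_or_isOuterArc (hγ : IsUnitThickLoop γ L) (htL : t ≤ s + L)
    (hd : dist (γ s) (γ t) < 1) : IsInnerArc γ s t ∨ IsOuterArc γ s t := by
  have hne_left : ∀ x ∈ Ioo s t, γ s ≠ γ x := fun x hx ↦ hγ.ne_of_lt hx.1 (by linarith [hx.2])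
  have hne_right : ∀ x ∈ Ioo s t, γ t ≠ γ x := fun x hx ↦
    (hγ.ne_of_lt hx.2 (by linarith [hx.1])).symm
  have hcont : ContinuousOn (fun x ↦ ∠ (γ s) (γ x) (γ t)) (Ioo s t) := fun x hx ↦
    ((EuclideanGeometry.continuousAt_angle (x := (γ s, γ x, γ t)) (hne_left x hx)
      (hne_right x hx)).comp (f := fun x ↦ (γ s, γ x, γ t))
        (by have := hγ.continuous; fun_prop)).continuousWithinAt
  by_contra! h
  simp only [IsInnerArc, IsOuterArc, not_forall, not_lt] at h
  obtain ⟨⟨x, hx, hx_le⟩, y, hy, hy_ge⟩ := h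
  obtain ⟨z, hz, hz_eq⟩ :=
    isPreconnected_Ioo.intermediate_value hx hy hcont ⟨hx_le, hy_ge⟩
  exact hγ.isUnitThick.angle_ne_pi_div_two (mem_range_self s) (mem_range_self t) (mem_range_self z)
    (hne_left z hz) (hne_right z hz) hd hz_eq

lemma exists_dist_eq_and_lt_angle (hγ : IsUnitThickLoop γ L) (hst : s < t) (htL : t < s + L)
    (hd : dist (γ s) (γ t) < 1) :
    ∃ x ∈ Ioo s t, ∃ y ∈ Ioo t (s + L), dist (γ t) (γ x) = dist (γ t) (γ y) ∧
      dist (γ t) (γ y) < dist (γ t) (γ s) ∧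
      2 * arcsin (dist (γ s) (γ t)) + 2 * arcsin (dist (γ t) (γ y)) < ∠ (γ x) (γ t) (γ y) := by
  obtain ⟨r, hr_pos, hr_lt, hr⟩ := exists_pos_lt_four_mul_arcsin_lt
    (dist_pos.2 (hγ.ne_of_lt hst htL).symm)
    (show 0 < π - 2 * arcsin (dist (γ s) (γ t)) by linarith [arcsin_lt_pi_div_two.2 hd])
  have hcont : Continuous fun x ↦ dist (γ t) (γ x) := continuous_const.dist hγ.continuous
  obtain ⟨x, hx, hxr⟩ :=
    intermediate_value_Ioo' hst.le hcont.continuousOn ⟨by simpa only [dist_self], hr_lt⟩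
  obtain ⟨y, hy, hyr⟩ := intermediate_value_Ioo htL.le hcont.continuousOn
    ⟨by simpa only [dist_self], by simpa only [hγ.periodic s]⟩
  dsimp only at hxr hyr
  have hxy : γ x ≠ γ y := hγ.ne_of_lt (hx.2.trans hy.1) (by linarith [hx.1, hy.2])
  have hangle := hγ.isUnitThick.pi_sub_angle_le_of_dist_eq (mem_range_self t) (mem_range_self x)
    (mem_range_self y) hxy (dist_pos.1 (hxr ▸ hr_pos)) (hxr.trans hyr.symm)
  rw [hyr] at hangle
  exact ⟨x, hx, y, hy, hxr.trans hyr.symm, hyr ▸ hr_lt, by rw [hyr]; linarith⟩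

lemma not_isInnerArc_compl (hγ : IsUnitThickLoop γ L) (hst : s < t) (htL : t < s + L)
    (hd : dist (γ s) (γ t) < 1) (h : IsInnerArc γ s t) : ¬ IsInnerArc γ t (s + L) := by
  intro h'
  obtain ⟨x, hx, y, hy, -, -, hlt⟩ := hγ.exists_dist_eq_and_lt_angle hst htL hd
  have hy_angle := h' y hy
  rw [hγ.periodic s, EuclideanGeometry.angle_comm] at hy_angle
  have hangle_x := hγ.isUnitThick.angle_le_arcsin_dist_of_pi_div_two_lt (mem_range_self s)
    (mem_range_self t) (mem_range_self x) (h x hx)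
  have hangle_y := hγ.isUnitThick.angle_le_arcsin_dist_of_pi_div_two_lt (mem_range_self s)
    (mem_range_self t) (mem_range_self y) hy_angle
  rw [EuclideanGeometry.angle_comm] at hangle_y
  linarith [EuclideanGeometry.angle_le_angle_add_angle (γ t) (γ x) (γ s) (γ y),
    arcsin_nonneg.2 (dist_nonneg (x := γ t) (y := γ y))]

lemma not_isOuterArc_compl (hγ : IsUnitThickLoop γ L) (hst : s < t) (htL : t < s + L)
    (hd : dist (γ s) (γ t) < 1) (h : IsOuterArc γ s t) : ¬ IsOuterArc γ t (s + L) := by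
  intro h'
  obtain ⟨x, hx, y, hy, hxy, hy_lt, hlt⟩ := hγ.exists_dist_eq_and_lt_angle hst htL hd
  have hy_angle := h' y hy
  rw [hγ.periodic s, EuclideanGeometry.angle_comm] at hy_angle
  have hangle_x := hγ.isUnitThick.pi_sub_angle_le_of_angle_lt_pi_div_two
    (mem_range_self s) (mem_range_self t) (mem_range_self x)
    (hγ.ne_of_lt hx.1 (by linarith [hx.2]))
    (hγ.ne_of_lt hx.2 (by linarith [hx.1])).symm (h x hx) (hxy ▸ hy_lt)
  have hangle_y := hγ.isUnitThick.pi_sub_angle_le_of_angle_lt_pi_div_two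
    (mem_range_self s) (mem_range_self t) (mem_range_self y)
    (hγ.ne_of_lt (hst.trans hy.1) hy.2)
    (hγ.ne_of_lt hy.1 (by linarith [hy.2])) hy_angle hy_lt
  rw [dist_comm (γ x), hxy] at hangle_x
  rw [dist_comm (γ y)] at hangle_y
  have hsum := angle_add_angle_add_angle_le_two_pi (γ x) (γ y) (γ s) (γ t)
  rw [EuclideanGeometry.angle_comm (γ s) (γ t) (γ x)] at hsum
  linarith

lemma isOuterArc_compl (hγ : IsUnitThickLoop γ L) (hst : s < t) (htL : t < s + L)
    (hd : dist (γ s) (γ t) < 1) (h : IsInnerArc γ s t) : IsOuterArc γ t (s + L) :=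
  (hγ.isInnerArc_or_isOuterArc (by linarith) (by rwa [hγ.periodic s, dist_comm])).resolve_left
    (hγ.not_isInnerArc_compl hst htL hd h)

lemma isInnerArc_or_isInnerArc_compl (hγ : IsUnitThickLoop γ L) (hst : s < t) (htL : t < s + L)
    (hd : dist (γ s) (γ t) < 1) : IsInnerArc γ s t ∨ IsInnerArc γ t (s + L) :=
  (hγ.isInnerArc_or_isOuterArc htL.le hd).imp_right fun h ↦
    (hγ.isInnerArc_or_isOuterArc (by linarith) (by rwa [hγ.periodic s, dist_comm])).resolve_right
      (hγ.not_isOuterArc_compl hst htL hd h)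

lemma isInnerArc_left (hγ : IsUnitThickLoop γ L) (htL : t < s + L) (hd : dist (γ s) (γ t) < 1)
    (h : IsInnerArc γ s t) (hx : x ∈ Icc s t) : IsInnerArc γ s x := by
  rcases eq_endpoints_or_mem_Ioo_of_mem_Icc hx with rfl | rfl | hxst
  · simp [IsInnerArc]
  · exact h
  have hangle_x := h x hxst
  refine (hγ.isInnerArc_or_isInnerArc_compl hxst.1 (hxst.2.trans htL)
    ((h.dist_left_le hx).trans_lt hd)).resolve_right fun h' ↦ ?_
  have hangle_t := h' t ⟨hxst.2, htL⟩
  rw [hγ.periodic s] at hangle_t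
  have hsum := EuclideanGeometry.angle_add_angle_add_angle_eq_pi (γ t)
    (ne_left_of_pi_div_two_lt_angle hangle_x).symm
  linarith [EuclideanGeometry.angle_nonneg (γ t) (γ s) (γ x)]

lemma isInnerArc_right (hγ : IsUnitThickLoop γ L) (htL : t < s + L) (hd : dist (γ s) (γ t) < 1)
    (h : IsInnerArc γ s t) (hx : x ∈ Icc s t) : IsInnerArc γ x t := by
  rcases eq_endpoints_or_mem_Ioo_of_mem_Icc hx with rfl | rfl | hxst
  · exact h
  · simp [IsInnerArc]
  have hangle_x := h x hxst
  refine (hγ.isInnerArc_or_isInnerArc_compl hxst.2 (by linarith [hxst.1])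
    ((h.dist_right_le hx).trans_lt hd)).resolve_right fun h' ↦ ?_
  have hangle_s := h' (s + L) ⟨htL, by linarith [hxst.1]⟩
  rw [hγ.periodic s, hγ.periodic x] at hangle_s
  have hsum := EuclideanGeometry.angle_add_angle_add_angle_eq_pi (γ t)
    (ne_left_of_pi_div_two_lt_angle hangle_x).symm
  rw [EuclideanGeometry.angle_comm (γ t)] at hangle_s
  rw [EuclideanGeometry.angle_comm (γ t) (γ s)] at hsum
  linarith [EuclideanGeometry.angle_nonneg (γ x) (γ t) (γ s)]

lemma eVariationOn_Icc_le_of_isInnerArc (hγ : IsUnitThickLoop γ L) (htL : t < s + L)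
    (hd : dist (γ s) (γ t) < 1) (h : IsInnerArc γ s t) :
    eVariationOn γ (Icc s t) ≤ ENNReal.ofReal (arcsin (dist (γ s) (γ t))) := by
  have hsub : ∀ ⦃x y⦄, s ≤ x → x ≤ y → y ≤ t →
      IsInnerArc γ x y ∧ dist (γ x) (γ y) ≤ 1 := fun x y hsx hxy hyt ↦ by
    have hx : x ∈ Icc s t := ⟨hsx, hxy.trans hyt⟩
    have hdx : dist (γ x) (γ t) < 1 := (h.dist_right_le hx).trans_lt hd
    have hx_inner : IsInnerArc γ x t := hγ.isInnerArc_right htL hd h hx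
    exact ⟨hγ.isInnerArc_left (by linarith) hdx hx_inner ⟨hxy, hyt⟩,
      (hx_inner.dist_left_le ⟨hxy, hyt⟩).trans hdx.le⟩
  refine eVariationOn_Icc_le_of_superadditive
    (φ := fun x y ↦ ENNReal.ofReal (arcsin (dist (γ x) (γ y)))) ?_ ?_
  · intro x y hsx hxy hyt
    rw [edist_dist]
    exact ENNReal.ofReal_le_ofReal (le_arcsin_self dist_nonneg (hsub hsx hxy hyt).2)
  · intro x y z hsx hxy hyz hzt
    obtain ⟨hinner, hle⟩ := hsub hsx (hxy.trans hyz) hzt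
    rw [← ENNReal.ofReal_add (arcsin_nonneg.2 dist_nonneg) (arcsin_nonneg.2 dist_nonneg)]
    exact ENNReal.ofReal_le_ofReal
      (hinner.arcsin_dist_add_arcsin_dist_le hγ.isUnitThick hle ⟨hxy, hyz⟩)

lemma range_inter_closedBall_of_isInnerArc (hγ : IsUnitThickLoop γ L) (hst : s < t)
    (htL : t < s + L) (hd : dist (γ s) (γ t) < 1) (h : IsInnerArc γ s t) :
    range γ ∩ Metric.closedBall (midpoint ℝ (γ s) (γ t)) (dist (γ s) (γ t) / 2) =
      γ '' Icc s t := by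
  ext p
  rw [mem_inter_iff, mem_closedBall_midpoint_iff]
  constructor
  · rintro ⟨⟨x, rfl⟩, hx⟩
    obtain ⟨y, hy, hxy⟩ := hγ.periodic.exists_mem_Ico hγ.pos x s
    refine ⟨y, ⟨hy.1, ?_⟩, hxy.symm⟩
    by_contra! hty
    have hangle := hγ.isOuterArc_compl hst htL hd h y ⟨hty, hy.2⟩
    rw [hγ.periodic s, EuclideanGeometry.angle_comm, ← hxy] at hangle
    exact hx.not_gt hangle
  · rintro ⟨x, hx, rfl⟩
    refine ⟨mem_range_self x, ?_⟩
    rcases eq_endpoints_or_mem_Ioo_of_mem_Icc hx with rfl | rfl | hx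
    · simp
    · simp
    · exact (h x hx).le

lemma exists_isInnerArc (hγ : IsUnitThickLoop γ L) {a b : P} (ha : a ∈ range γ) (hb : b ∈ range γ)
    (hab : a ≠ b) (hd : dist a b < 1) :
    ∃ s t, s < t ∧ t < s + L ∧ ((γ s = a ∧ γ t = b) ∨ (γ s = b ∧ γ t = a)) ∧
      IsInnerArc γ s t := by
  obtain ⟨s, rfl⟩ := ha
  obtain ⟨x, rfl⟩ := hb
  obtain ⟨t, ht, hxt⟩ := hγ.periodic.exists_mem_Ico hγ.pos x s
  rw [hxt] at hab hd ⊢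
  have hst : s < t := ht.1.lt_of_ne (by rintro rfl; exact hab rfl)
  rcases hγ.isInnerArc_or_isInnerArc_compl hst ht.2 hd with h | h
  · exact ⟨s, t, hst, ht.2, .inl ⟨rfl, rfl⟩, h⟩
  · exact ⟨t, s + L, ht.2, by linarith, .inr ⟨rfl, hγ.periodic s⟩, h⟩

end IsUnitThickLoop

theorem stmt14_general (hγ : IsUnitThickLoop γ L) {a b : P} (ha : a ∈ range γ) (hb : b ∈ range γ)
    (hab : a ≠ b) (hd : dist a b < 1) :
    ∃ s t : ℝ, s < t ∧ t - s ≤ L ∧ ((γ s = a ∧ γ t = b) ∨ (γ s = b ∧ γ t = a)) ∧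
      range γ ∩ Metric.closedBall (midpoint ℝ a b) (dist a b / 2) = γ '' Icc s t ∧
      eVariationOn γ (Icc s t) ≤ ENNReal.ofReal (arcsin (dist a b)) := by
  obtain ⟨s, t, hst, htL, hends, h⟩ := hγ.exists_isInnerArc ha hb hab hd
  have hmid : midpoint ℝ a b = midpoint ℝ (γ s) (γ t) := by
    rcases hends with ⟨rfl, rfl⟩ | ⟨rfl, rfl⟩
    · rfl
    · exact midpoint_comm _ _
  have hdist : dist a b = dist (γ s) (γ t) := by
    rcases hends with ⟨rfl, rfl⟩ | ⟨rfl, rfl⟩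
    · rfl
    · exact dist_comm _ _
  rw [hdist] at hd
  rw [hmid, hdist]
  exact ⟨s, t, hst, by linarith, hends, hγ.range_inter_closedBall_of_isInnerArc hst htL hd h,
    hγ.eVariationOn_Icc_le_of_isInnerArc htL hd h⟩

end Arc

/-- For a closed curve of unit thickness and `a, b` on the curve with `0 < |a-b| < 1`,
the closed ball with diameter `ab` meets the curve in a single subarc joining `a`
and `b`, of length at most `arcsin |a-b|`. -/
theorem stmt14 (γ : ℝ → E3) (L : ℝ) (hL : 0 < L) (hcont : Continuous γ)
    (hper : Function.Periodic γ L) (hinj : Set.InjOn γ (Set.Ico 0 L))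
    (hthick : ThickOne (Set.range γ))
    (a b : E3) (ha : a ∈ Set.range γ) (hb : b ∈ Set.range γ)
    (hd0 : 0 < dist a b) (hd1 : dist a b < 1) :
    ∃ s t : ℝ, s < t ∧ t - s ≤ L ∧
      ((γ s = a ∧ γ t = b) ∨ (γ s = b ∧ γ t = a)) ∧
      Set.range γ ∩ Metric.closedBall (midpoint ℝ a b) (dist a b / 2) =
        γ '' Set.Icc s t ∧
      eVariationOn γ (Set.Icc s t) ≤ ENNReal.ofReal (Real.arcsin (dist a b)) :=
  stmt14_general ⟨hL, hcont, hper, hinj, hthick⟩ ha hb (dist_pos.1 hd0) hd1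
end
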